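/- Let E be a complex Banach space and A, B bounded linear operators on E. Then the following are equivalent: (i) for every bounded linear operator C on E there exists a unique bounded linear operator X on E such that A∘X + X∘B + C = 0; (ii) the spectra of A and −B are disjoint, i.e. σ(A) ∩ σ(−B) = ∅. -/

import Mathlib

namespace SylvRos

open Set

/-- Commuting elements of a Banach algebra with disjoint spectra differ by a unit. -/
theorem isUnit_sub_of_disjoint {R : Type*} [NormedRing R] [NormedAlgebra ℂ R] [CompleteSpace R]
    (a b : R) (hab : a * b = b * a)
    (h : ∀ z : ℂ, IsUnit (algebraMap ℂ R z - a) ∨ IsUnit (algebraMap ℂ R z - b)) :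
    IsUnit (a - b) := by
  let s : Set R := {a, b}
  have hs : s ⊆ s.centralizer := by
    intro x hx y hy
    rcases hx with rfl | rfl <;> rcases hy with rfl | rfl <;> simp [hab]
  let S : Subalgebra ℂ R := Subalgebra.centralizer ℂ (s.centralizer)
  have hS : ∀ x ∈ S, ∀ y ∈ S, x * y = y * x := by
    intro x hx y hy
    have hy' : y ∈ s.centralizer := Set.centralizer_subset hs hy
    exact (hx y hy').symm
  have hclosed : IsClosed (S : Set R) := Set.isClosed_centralizer _
  letI : NormedCommRing S :=
    { (inferInstance : NormedRing S) with mul_comm := fun x y => Subtype.ext (hS x x.2 y y.2) }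
  letI : NormedAlgebra ℂ S := Subalgebra.toNormedAlgebra S
  haveI : CompleteSpace S := hclosed.completeSpace_coe
  have haS : a ∈ S := Set.subset_centralizer_centralizer (by simp [s])
  have hbS : b ∈ S := Set.subset_centralizer_centralizer (by simp [s])
  have hinv : ∀ x : S, IsUnit (x : R) → IsUnit x := by
    rintro ⟨x, hx⟩ ⟨u, hu⟩
    simp only at hu
    subst hu
    have hu' : (↑u⁻¹ : R) ∈ S := by
      intro y hy
      have h1 : Commute y (u : R) := hx y hy
      exact h1.units_inv_right
    exact IsUnit.of_mul_eq_one (⟨_, hu'⟩ : S) (Subtype.ext (by simp))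
  by_contra hn
  let a' : S := ⟨a, haS⟩
  let b' : S := ⟨b, hbS⟩
  have hn' : ¬ IsUnit (a' - b') := fun hu => hn (hu.map S.val)
  obtain ⟨φ, hφ⟩ := WeakDual.CharacterSpace.exists_apply_eq_zero hn'
  have hφ2 : φ a' = φ b' := by
    rw [map_sub] at hφ
    exact sub_eq_zero.1 hφ
  have key : ∀ c : S, φ c = φ a' → ¬ IsUnit (algebraMap ℂ R (φ a') - (c : R)) := by
    intro c hc hu
    have h2 : IsUnit (algebraMap ℂ S (φ a') - c) := hinv _ hu
    have h3 := h2.map φ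
    rw [map_sub, AlgHomClass.commutes, hc] at h3
    simp at h3
  rcases h (φ a') with h | h
  · exact key a' rfl h
  · exact key b' hφ2.symm h

variable {E : Type*} [NormedAddCommGroup E] [NormedSpace ℂ E] [CompleteSpace E]

/-- Not bounded below. -/
def TL (A : E →L[ℂ] E) : Prop := ∀ ε > 0, ∃ x : E, x ≠ 0 ∧ ‖A x‖ ≤ ε * ‖x‖

/-- The adjoint is not bounded below. -/
def TD (A : E →L[ℂ] E) : Prop :=
  ∀ ε > 0, ∃ f : E →L[ℂ] ℂ, f ≠ 0 ∧ ‖f.comp A‖ ≤ ε * ‖f‖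

theorem TL_or_TD (A : E →L[ℂ] E) (hA : ¬ IsUnit A) : TL A ∨ TD A := by
  by_contra hcon
  rw [not_or] at hcon
  obtain ⟨h1, h2⟩ := hcon
  apply hA
  rw [ContinuousLinearMap.isUnit_iff_bijective,
    ContinuousLinearMap.bijective_iff_dense_range_and_antilipschitz]
  constructor
  · by_contra hne
    apply h2
    intro ε hε
    set p := A.range.topologicalClosure with hp
    haveI : IsClosed (p : Set E) := Submodule.isClosed_topologicalClosure _
    obtain ⟨x, hx⟩ : ∃ x, x ∉ p := by
      by_contra! hall
      exact hne (eq_top_iff.2 fun x _ => hall x)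
    have hx' : ‖p.mkQ x‖ ≠ 0 := by
      rw [norm_ne_zero_iff]
      simpa using hx
    obtain ⟨g, -, hg2⟩ := exists_dual_vector ℂ (p.mkQ x) hx'
    refine ⟨g.comp p.mkQL, ?_, ?_⟩
    · intro h0
      have := DFunLike.congr_fun h0 x
      simp only [ContinuousLinearMap.comp_apply, Submodule.coe_mkQL, hg2] at this
      exact hx' (by simpa using this)
    · have : (g.comp p.mkQL).comp A = 0 := by
        ext y
        have hy : p.mkQ (A y) = 0 := by
          rw [Submodule.mkQ_apply, Submodule.Quotient.mk_eq_zero]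
          exact Submodule.le_topologicalClosure _ ⟨y, rfl⟩
        simp only [ContinuousLinearMap.comp_apply, Submodule.coe_mkQL, hy]
        simp
      rw [this, norm_zero]
      positivity
  · unfold TL at h1
    push Not at h1
    obtain ⟨ε, hε, h⟩ := h1
    refine ⟨(Real.toNNReal ε)⁻¹, AddMonoidHomClass.antilipschitz_of_bound A ?_⟩
    intro x
    by_cases hx : x = 0
    · simp [hx]
    · have := (h x hx).le
      rw [NNReal.coe_inv, Real.coe_toNNReal _ hε.le]
      rw [inv_mul_eq_div, le_div_iff₀ hε]
      linarith

theorem not_unit_limit (A : E →L[ℂ] E) (hA : ¬ IsUnit A)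
    (hlim : ∀ ε > 0, ∃ u : (E →L[ℂ] E)ˣ, ‖A - u‖ < ε) :
    ∀ ε > 0, ∃ u : (E →L[ℂ] E)ˣ, ‖A - u‖ < ε ∧ ε⁻¹ < ‖(↑u⁻¹ : E →L[ℂ] E)‖ := by
  intro ε hε
  obtain ⟨u, hu⟩ := hlim ε hε
  refine ⟨u, hu, ?_⟩
  by_contra! hle
  haveI : Nontrivial (E →L[ℂ] E) := by
    by_contra hn
    rw [not_nontrivial_iff_subsingleton] at hn
    exact hA (isUnit_of_subsingleton A)
  have hpos := Units.norm_pos u⁻¹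
  apply hA
  have : ‖A - u‖ < ‖(↑u⁻¹ : E →L[ℂ] E)‖⁻¹ := by
    refine hu.trans_le ?_
    rw [le_inv_comm₀ hε hpos]
    exact hle
  exact (u.ofNearby A this).isUnit

theorem TL_of_limit (A : E →L[ℂ] E) (hA : ¬ IsUnit A)
    (hlim : ∀ ε > 0, ∃ u : (E →L[ℂ] E)ˣ, ‖A - u‖ < ε) : TL A := by
  intro ε hε
  obtain ⟨u, hu1, hu2⟩ := not_unit_limit A hA hlim (ε / 2) (by positivity)
  obtain ⟨v, hv⟩ := ContinuousLinearMap.exists_mul_lt_of_lt_opNorm _ (by positivity) hu2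
  set w := (↑u⁻¹ : E →L[ℂ] E) v with hw
  have huw : (u : E →L[ℂ] E) w = v := by
    have : ((u : E →L[ℂ] E) * (↑u⁻¹ : E →L[ℂ] E)) v = v := by rw [Units.mul_inv]; rfl
    exact this
  refine ⟨w, ?_, ?_⟩
  · intro h0
    rw [h0, norm_zero] at hv
    have : 0 ≤ (ε / 2)⁻¹ * ‖v‖ := by positivity
    linarith
  · have h1 : A w = (A - u) w + v := by simp [huw]
    have h2 : ‖(A - u) w‖ ≤ ε / 2 * ‖w‖ := ContinuousLinearMap.le_of_opNorm_le _ hu1.le _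
    have h3 : ‖v‖ ≤ ε / 2 * ‖w‖ := by
      rw [inv_mul_lt_iff₀ (by positivity)] at hv
      exact hv.le
    rw [h1]
    linarith [norm_add_le ((A - u) w) v]

theorem TD_of_limit (A : E →L[ℂ] E) (hA : ¬ IsUnit A)
    (hlim : ∀ ε > 0, ∃ u : (E →L[ℂ] E)ˣ, ‖A - u‖ < ε) : TD A := by
  intro ε hε
  obtain ⟨u, hu1, hu2⟩ := not_unit_limit A hA hlim (ε / 2) (by positivity)
  obtain ⟨v, hv⟩ := ContinuousLinearMap.exists_mul_lt_of_lt_opNorm _ (by positivity) hu2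
  set w := (↑u⁻¹ : E →L[ℂ] E) v with hw
  obtain ⟨g, hg1, hg2⟩ := exists_dual_vector'' ℂ w
  set f : E →L[ℂ] ℂ := g.comp (↑u⁻¹ : E →L[ℂ] E) with hf
  have hfv : ‖f v‖ = ‖w‖ := by
    have : f v = g w := rfl
    rw [this, hg2]; simp
  have hfn : (ε / 2)⁻¹ < ‖f‖ := by
    by_contra! hle
    have := ContinuousLinearMap.le_of_opNorm_le f hle v
    linarith
  refine ⟨f, ?_, ?_⟩
  · intro h0
    rw [h0, norm_zero] at hfn
    have : 0 < (ε / 2)⁻¹ := by positivity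
    linarith
  · have h1 : f.comp A = f.comp (A - (u : E →L[ℂ] E)) + g := by
      ext y
      have : ((↑u⁻¹ : E →L[ℂ] E) * (u : E →L[ℂ] E)) y = y := by rw [Units.inv_mul]; rfl
      have h' : f ((u : E →L[ℂ] E) y) = g y := congrArg g this
      simp [h']
    have h2 : ‖f.comp (A - (u : E →L[ℂ] E))‖ ≤ ε / 2 * ‖f‖ := by
      refine (ContinuousLinearMap.opNorm_comp_le _ _).trans ?_
      rw [mul_comm]
      gcongr
    have h3 : 1 ≤ ε / 2 * ‖f‖ := by
      rw [inv_lt_iff_one_lt_mul₀' (by positivity)] at hfn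
      exact hfn.le
    rw [h1]
    linarith [norm_add_le (f.comp (A - (u : E →L[ℂ] E))) g]

theorem case_one (A B : E →L[ℂ] E) (hA : TL A) (hB : TD B) (K : ℝ) (hK : 0 < K)
    (h : ∀ X : E →L[ℂ] E, ‖X‖ ≤ K * ‖A * X + X * B‖) : False := by
  obtain ⟨x, hx0, hx⟩ := hA (1 / (4 * K)) (by positivity)
  obtain ⟨f, hf0, hf⟩ := hB (1 / (4 * K)) (by positivity)
  have h1 := h (f.smulRight x)
  have h2 : A * (f.smulRight x) + (f.smulRight x) * B
      = f.smulRight (A x) + (f.comp B).smulRight x := by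
    ext y
    simp
  rw [h2] at h1
  have h3 := norm_add_le (f.smulRight (A x)) ((f.comp B).smulRight x)
  simp only [ContinuousLinearMap.norm_smulRight_apply] at h1 h3
  have hfp : 0 < ‖f‖ := norm_pos_iff.2 hf0
  have hxp : 0 < ‖x‖ := norm_pos_iff.2 hx0
  have h4 : ‖f‖ * ‖A x‖ ≤ ‖f‖ * (1 / (4 * K) * ‖x‖) := by gcongr
  have h5 : ‖f.comp B‖ * ‖x‖ ≤ 1 / (4 * K) * ‖f‖ * ‖x‖ := by gcongr
  have h6 : ‖f‖ * ‖x‖ ≤ K * (‖f‖ * (1 / (4 * K) * ‖x‖) + 1 / (4 * K) * ‖f‖ * ‖x‖) :=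
    h1.trans (by gcongr; linarith)
  have h7 : K * (‖f‖ * (1 / (4 * K) * ‖x‖) + 1 / (4 * K) * ‖f‖ * ‖x‖) = ‖f‖ * ‖x‖ / 2 := by
    field_simp
    ring
  have : 0 < ‖f‖ * ‖x‖ := by positivity
  linarith

theorem case_two (A B : E →L[ℂ] E) (hA : TD A) (hB : TL B) (K : ℝ) (hK : 0 < K)
    (h : ∀ C : E →L[ℂ] E, ∃ X : E →L[ℂ] E, A * X + X * B = C ∧ ‖X‖ ≤ K * ‖C‖) : False := by
  obtain ⟨f, hf0, hf⟩ := hA (1 / (4 * K)) (by positivity)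
  obtain ⟨x, hx0, hx⟩ := hB (1 / (4 * K)) (by positivity)
  have hfp : 0 < ‖f‖ := norm_pos_iff.2 hf0
  have hxp : 0 < ‖x‖ := norm_pos_iff.2 hx0
  obtain ⟨v, hv⟩ := f.exists_mul_lt_of_lt_opNorm (r := ‖f‖ / 2) (by positivity) (by linarith)
  obtain ⟨g, hg1, hg2⟩ := exists_dual_vector'' ℂ x
  obtain ⟨X, hX, hXn⟩ := h (g.smulRight v)
  rw [ContinuousLinearMap.norm_smulRight_apply] at hXn
  have hXn' : ‖X‖ ≤ K * ‖v‖ := hXn.trans (by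
    gcongr
    exact mul_le_of_le_one_left (norm_nonneg _) hg1)
  have h1 : f.comp A (X x) + f (X (B x)) = (‖x‖ : ℂ) * f v := by
    have := congrArg f (DFunLike.congr_fun hX x)
    simpa [hg2] using this
  have h2 : ‖f.comp A (X x)‖ ≤ (1 / (4 * K) * ‖f‖) * ((K * ‖v‖) * ‖x‖) := by
    refine (ContinuousLinearMap.le_of_opNorm_le _ hf _).trans ?_
    gcongr
    exact ContinuousLinearMap.le_of_opNorm_le _ hXn' _
  have h3 : ‖f (X (B x))‖ ≤ ‖f‖ * ((K * ‖v‖) * (1 / (4 * K) * ‖x‖)) := by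
    refine (f.le_opNorm _).trans ?_
    gcongr
    refine (ContinuousLinearMap.le_of_opNorm_le _ hXn' _).trans ?_
    gcongr
  have h4 : ‖x‖ * ‖f v‖ = ‖f.comp A (X x) + f (X (B x))‖ := by
    rw [h1]; simp
  have h5 := norm_add_le (f.comp A (X x)) (f (X (B x)))
  have h6 : (1 / (4 * K) * ‖f‖) * ((K * ‖v‖) * ‖x‖) + ‖f‖ * ((K * ‖v‖) * (1 / (4 * K) * ‖x‖))
      = ‖x‖ * (‖f‖ / 2 * ‖v‖) := by
    field_simp
    ring
  have h7 : ‖x‖ * (‖f‖ / 2 * ‖v‖) < ‖x‖ * ‖f v‖ := by gcongr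
  linarith

/-- The Sylvester operator. -/
noncomputable def syl (A B : E →L[ℂ] E) : (E →L[ℂ] E) →L[ℂ] (E →L[ℂ] E) :=
  ContinuousLinearMap.mul ℂ (E →L[ℂ] E) A - (ContinuousLinearMap.mul ℂ (E →L[ℂ] E)).flip (-B)

theorem syl_apply (A B X : E →L[ℂ] E) : syl A B X = A * X + X * B := by
  simp [syl]

theorem syl_bij_iff (A B : E →L[ℂ] E) :
    (∀ C : E →L[ℂ] E, ∃! X : E →L[ℂ] E, A.comp X + X.comp B + C = 0) ↔
      Function.Bijective (syl A B) := by
  rw [Function.bijective_iff_existsUnique]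
  constructor
  · intro h C
    refine (existsUnique_congr fun X => ?_).1 (h (-C))
    rw [syl_apply, ← sub_eq_add_neg, sub_eq_zero]
    rfl
  · intro h C
    refine (existsUnique_congr fun X => ?_).1 (h (-C))
    rw [syl_apply, eq_neg_iff_add_eq_zero]
    rfl

theorem bij_of_disjoint (A B : E →L[ℂ] E) (h : spectrum ℂ A ∩ spectrum ℂ (-B) = ∅) :
    Function.Bijective (syl A B) := by
  rw [← ContinuousLinearMap.isUnit_iff_bijective]
  apply isUnit_sub_of_disjoint
  · ext1 X
    simp [mul_assoc]
  · intro z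
    have hz : z ∉ spectrum ℂ A ∩ spectrum ℂ (-B) := by rw [h]; simp
    rw [Set.mem_inter_iff, not_and_or, spectrum.notMem_iff, spectrum.notMem_iff] at hz
    rcases hz with ⟨u, hu⟩ | ⟨u, hu⟩
    · left
      refine isUnit_iff_exists.2 ⟨ContinuousLinearMap.mul ℂ (E →L[ℂ] E) (↑u⁻¹), ?_, ?_⟩
      · ext1 X
        have : (algebraMap ℂ (E →L[ℂ] E) z - A) * ((↑u⁻¹ : E →L[ℂ] E) * X) = X := by
          rw [← hu, Units.mul_inv_cancel_left]
        simpa [sub_mul, Algebra.algebraMap_eq_smul_one] using this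
      · ext1 X
        have : (↑u⁻¹ : E →L[ℂ] E) * ((algebraMap ℂ (E →L[ℂ] E) z - A) * X) = X := by
          rw [← hu, Units.inv_mul_cancel_left]
        simpa [sub_mul, mul_sub, Algebra.algebraMap_eq_smul_one] using this
    · right
      refine isUnit_iff_exists.2 ⟨(ContinuousLinearMap.mul ℂ (E →L[ℂ] E)).flip (↑u⁻¹), ?_, ?_⟩
      · ext1 X
        have : (X * (↑u⁻¹ : E →L[ℂ] E)) * (algebraMap ℂ (E →L[ℂ] E) z - (-B)) = X := by
          rw [← hu, Units.inv_mul_cancel_right]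
        simpa [mul_add, Algebra.algebraMap_eq_smul_one] using this
      · ext1 X
        have : (X * (algebraMap ℂ (E →L[ℂ] E) z - (-B))) * (↑u⁻¹ : E →L[ℂ] E) = X := by
          rw [← hu, Units.mul_inv_cancel_right]
        simpa [mul_add, add_mul, Algebra.algebraMap_eq_smul_one] using this

theorem limit_of_frontier (T : E →L[ℂ] E) (z : ℂ) (hz : z ∈ frontier (spectrum ℂ T)) :
    ∀ ε > 0, ∃ u : (E →L[ℂ] E)ˣ, ‖(algebraMap ℂ (E →L[ℂ] E) z - T) - u‖ < ε := by
  intro ε hε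
  rw [frontier_eq_closure_inter_closure] at hz
  have hcont : Continuous fun w : ℂ => algebraMap ℂ (E →L[ℂ] E) w := continuous_algebraMap _ _
  obtain ⟨δ, hδ, hd⟩ := Metric.continuous_iff.1 hcont z ε hε
  obtain ⟨w, hw, hwz⟩ := Metric.mem_closure_iff.1 hz.2 δ hδ
  obtain ⟨u, hu⟩ := spectrum.notMem_iff.1 hw
  refine ⟨u, ?_⟩
  have := hd w (by rwa [dist_comm])
  rw [dist_comm, dist_eq_norm] at this
  rwa [hu, sub_sub_sub_cancel_right]

theorem disjoint_of_bij (A B : E →L[ℂ] E) (h : Function.Bijective (syl A B)) :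
    spectrum ℂ A ∩ spectrum ℂ (-B) = ∅ := by
  by_contra hne
  have hcA : IsClosed (spectrum ℂ A) := spectrum.isClosed A
  have hcB : IsClosed (spectrum ℂ (-B)) := spectrum.isClosed (-B)
  have hfr : (frontier (spectrum ℂ A ∩ spectrum ℂ (-B))).Nonempty := by
    rw [nonempty_frontier_iff]
    refine ⟨Set.nonempty_iff_ne_empty.2 hne, fun htop => ?_⟩
    have hb : Bornology.IsBounded (spectrum ℂ A ∩ spectrum ℂ (-B)) :=
      (spectrum.isBounded A).subset Set.inter_subset_left
    rw [htop] at hb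
    exact NormedSpace.unbounded_univ ℂ ℂ hb
  obtain ⟨z, hz⟩ := hfr
  obtain ⟨K, hK, hKs⟩ := ContinuousLinearMap.exists_preimage_norm_le (syl A B) h.2
  set a := algebraMap ℂ (E →L[ℂ] E) z - A with ha
  set b := algebraMap ℂ (E →L[ℂ] E) z - (-B) with hb
  have hab : ∀ X, (-a) * X + X * b = syl A B X := by
    intro X
    rw [syl_apply, ha, hb, Algebra.algebraMap_eq_smul_one]
    simp [sub_mul, mul_add]
    abel
  have hs : ∀ C : E →L[ℂ] E, ∃ X : E →L[ℂ] E, (-a) * X + X * b = C ∧ ‖X‖ ≤ K * ‖C‖ := by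
    intro C
    simpa only [hab] using hKs C
  have hi : ∀ X : E →L[ℂ] E, ‖X‖ ≤ K * ‖(-a) * X + X * b‖ := by
    intro X
    obtain ⟨Y, hY, hYn⟩ := hKs (syl A B X)
    rw [hab, ← h.1 hY]
    rwa [h.1 hY] at hYn ⊢
  have hTL : TL a → TL (-a) := fun h ε hε => by simpa using h ε hε
  have hTD : TD a → TD (-a) := fun h ε hε => by simpa using h ε hε
  have hzz : z ∈ spectrum ℂ A ∩ spectrum ℂ (-B) := (hcA.inter hcB).frontier_subset hz
  have hna : ¬ IsUnit a := hzz.1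
  have hnb : ¬ IsUnit b := hzz.2
  rcases frontier_inter_subset _ _ hz with hz | hz
  · have hl := limit_of_frontier A z hz.1
    rcases TL_or_TD b hnb with hb' | hb'
    · exact case_two _ _ (hTD (TD_of_limit a hna hl)) hb' K hK hs
    · exact case_one _ _ (hTL (TL_of_limit a hna hl)) hb' K hK hi
  · have hl := limit_of_frontier (-B) z hz.2
    rcases TL_or_TD a hna with ha' | ha'
    · exact case_one _ _ (hTL ha') (TD_of_limit b hnb hl) K hK hi
    · exact case_two _ _ (hTD ha') (TL_of_limit b hnb hl) K hK hs

end SylvRos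


/-- Sylvester–Rosenblum theorem: for bounded operators `A, B` on a complex
Banach space, the Sylvester equation `A∘X + X∘B + C = 0` has a unique bounded
solution `X` for every bounded `C` if and only if `σ(A) ∩ σ(-B) = ∅`. -/
theorem stmt_3 {E : Type*} [NormedAddCommGroup E] [NormedSpace ℂ E] [CompleteSpace E]
    (A B : E →L[ℂ] E) :
    (∀ C : E →L[ℂ] E, ∃! X : E →L[ℂ] E, A.comp X + X.comp B + C = 0) ↔
      spectrum ℂ A ∩ spectrum ℂ (-B) = ∅ := by
  rw [SylvRos.syl_bij_iff]
  exact ⟨SylvRos.disjoint_of_bij A B, SylvRos.bij_of_disjoint A B⟩
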